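/- arXiv:2210.06692 — 2 statements merged into one kernel-verified Lean document; each statement's English description precedes it below -/
import Mathlib

section
/- (Theorem 3, second bullet) For any fixed integer N ≥ 1 and any 1 ≤ k < N, the fixed points satisfy Q^π_{N,k}(s,a) ≤ Q^π_{N,k+1}(s,a) for all (s,a); that is, for fixed N the fixed point Q^π_{N,k} element-wise increases with k. -/
/-- `kmin x k` is the entry in position `k` (0-indexed) of a monotone nondecreasing
sorted arrangement of the tuple `x`, i.e. the `(k+1)`-th smallest entry counted with
multiplicity. -/
noncomputable def kmin {N : ℕ} (x : Fin N → ℝ) (k : Fin N) : ℝ := x (Tuple.sort x k)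

/-- A probability mass function on a finite type: nonnegative and summing to one. -/
def IsPMF {α : Type*} [Fintype α] (p : α → ℝ) : Prop :=
  (∀ a, 0 ≤ p a) ∧ ∑ a, p a = 1

/-- Sup norm `‖Q‖_∞ = max_{(s,a)} |Q(s,a)|` on `S × A → ℝ` (curried). -/
noncomputable def supNorm {S A : Type*} [Fintype S] [Fintype A] [Nonempty S] [Nonempty A]
    (Q : S → A → ℝ) : ℝ :=
  Finset.univ.sup' Finset.univ_nonempty (fun p : S × A => |Q p.1 p.2|)

/-- The `(N,k)`-pessimistic Bellman operator (with `k` given 0-indexed as `k : Fin N`):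
`(B^π_{N,k} Q)(s,a) = r(s,a) + γ · Σ_{v : Fin N → ι} (Π_j P(v_j)) ·
  kmin_k( j ↦ Σ_{s'} M(v_j)(s,a)(s') · Σ_{a'} π(a'|s') · Q(s',a') )`. -/
noncomputable def pessBellman {S A ι : Type*} [Fintype S] [Fintype A] [Fintype ι]
    (r : S → A → ℝ) (γ : ℝ) (P : ι → ℝ) (M : ι → S → A → S → ℝ)
    (π : S → A → ℝ) (N : ℕ) (k : Fin N) (Q : S → A → ℝ) : S → A → ℝ :=
  fun s a => r s a + γ * ∑ v : Fin N → ι, (∏ j, P (v j)) *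
    kmin (fun j => ∑ s', M (v j) s a s' * ∑ a', π s' a' * Q s' a') k

theorem kmin_le_kmin_add {N : ℕ} (x y : Fin N → ℝ) (d : ℝ) (h : ∀ j, x j ≤ y j + d)
    (i i' : Fin N) (hi : i ≤ i') : kmin x i ≤ kmin y i' + d := by
  by_contra hc
  push Not at hc
  have hx := Tuple.monotone_sort x
  have hy := Tuple.monotone_sort y
  have key : ∀ j ∈ Finset.Iic i', (Tuple.sort x).symm (Tuple.sort y j) ∈ Finset.Iio i := by
    intro j hj
    rw [Finset.mem_Iic] at hj
    rw [Finset.mem_Iio]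
    by_contra hn
    push Not at hn
    have h1 := hx hn
    have h2 := hy hj
    have h3 := h (Tuple.sort y j)
    simp only [Function.comp_apply, Equiv.apply_symm_apply] at h1 h2
    unfold kmin at hc
    linarith
  have hcard := Finset.card_le_card_of_injOn _ key (by
    intro a _ b _ hab
    simpa using hab)
  simp only [Fin.card_Iic, Fin.card_Iio] at hcard
  have : (i : ℕ) ≤ i' := hi
  omega

theorem IsPMF.avg_le {α : Type*} [Fintype α] {p : α → ℝ} (hp : IsPMF p) (f g : α → ℝ) (d : ℝ)
    (h : ∀ a, f a ≤ g a + d) : ∑ a, p a * f a ≤ ∑ a, p a * g a + d := by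
  calc ∑ a, p a * f a ≤ ∑ a, p a * (g a + d) :=
        Finset.sum_le_sum fun a _ => mul_le_mul_of_nonneg_left (h a) (hp.1 a)
    _ = ∑ a, p a * g a + d := by
        simp only [mul_add, Finset.sum_add_distrib]
        rw [← Finset.sum_mul, hp.2, one_mul]

theorem IsPMF.pi {ι : Type*} [Fintype ι] {P : ι → ℝ} (hP : IsPMF P) (N : ℕ) :
    IsPMF (fun v : Fin N → ι => ∏ j, P (v j)) := by
  classical
  refine ⟨fun v => Finset.prod_nonneg fun j _ => hP.1 _, ?_⟩
  rw [← Fintype.prod_sum (fun (_ : Fin N) (b : ι) => P b)]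
  simp [hP.2]

/-- Theorem 3, second bullet: for fixed `N ≥ 1` and `1 ≤ k < N`, the fixed points of the
`(N,k)`- and `(N,k+1)`-pessimistic Bellman operators satisfy
`Q^π_{N,k}(s,a) ≤ Q^π_{N,k+1}(s,a)` for all `(s,a)`. -/
theorem pessBellman_fixedPoint_mono_k {S A ι : Type*} [Fintype S] [Fintype A] [Fintype ι]
    (r : S → A → ℝ) (γ : ℝ) (hγ0 : 0 ≤ γ) (hγ1 : γ < 1)
    (π : S → A → ℝ) (hπ : ∀ s, IsPMF (π s))
    (P : ι → ℝ) (hP : IsPMF P)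
    (M : ι → S → A → S → ℝ) (hM : ∀ v s a, IsPMF (M v s a))
    (N k : ℕ) (hk1 : 1 ≤ k) (hkN : k < N)
    (Q1 Q2 : S → A → ℝ)
    (hQ1 : pessBellman r γ P M π N ⟨k - 1, by omega⟩ Q1 = Q1)
    (hQ2 : pessBellman r γ P M π N ⟨k + 1 - 1, by omega⟩ Q2 = Q2) :
    ∀ s a, Q1 s a ≤ Q2 s a := by
  intro s a
  obtain ⟨⟨s0, a0⟩, -, hmax⟩ := Finset.exists_max_image (Finset.univ : Finset (S × A))
    (fun p => Q1 p.1 p.2 - Q2 p.1 p.2) ⟨(s, a), Finset.mem_univ _⟩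
  set d := Q1 s0 a0 - Q2 s0 a0 with hd
  have hle : ∀ s a, Q1 s a ≤ Q2 s a + d := fun s a => by
    have := hmax (s, a) (Finset.mem_univ _)
    simp only at this
    linarith
  have e1 := congrFun (congrFun hQ1 s0) a0
  have e2 := congrFun (congrFun hQ2 s0) a0
  unfold pessBellman at e1 e2
  have hs := (hP.pi N).avg_le _ _ d (fun v => kmin_le_kmin_add
    (fun j => ∑ s', M (v j) s0 a0 s' * ∑ a', π s' a' * Q1 s' a')
    (fun j => ∑ s', M (v j) s0 a0 s' * ∑ a', π s' a' * Q2 s' a') d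
    (fun j => (hM (v j) s0 a0).avg_le _ _ d fun s' => (hπ s').avg_le _ _ d (hle s'))
    ⟨k - 1, by omega⟩ ⟨k + 1 - 1, by omega⟩ (by simp [Fin.le_def]))
  have hs' := mul_le_mul_of_nonneg_left hs hγ0
  have hdd : d ≤ γ * d := by
    rw [mul_add] at hs'
    linarith
  have : d ≤ 0 := by nlinarith
  linarith [hle s a]
end

section
/- (Theorem 4, contraction part) The soft (N,k)-pessimistic Bellman operator is a γ-contraction for the sup norm: for all Q1, Q2 : S × A → ℝ, ‖B̄*_{N,k;μ} Q1 − B̄*_{N,k;μ} Q2‖_∞ ≤ γ · ‖Q1 − Q2‖_∞. Consequently it has a unique fixed point Q̄*_{N,k;μ}, and for any starting Q the iterates (B̄*_{N,k;μ})^n Q converge to Q̄*_{N,k;μ} in sup norm. -/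
/-- Kullback–Leibler divergence `KL(p‖q) = Σ_a p(a)·log(p(a)/q(a))` on a finite type
(with the convention `0·log 0 = 0`, automatic here). -/
noncomputable def KLdiv {α : Type*} [Fintype α] (p q : α → ℝ) : ℝ :=
  ∑ a, p a * Real.log (p a / q a)

/-- The soft `(N,k)`-pessimistic Bellman operator with reference policy `μ` and
coefficient `α` (with `k` given 0-indexed as `k : Fin N`):
`(B̄*_{N,k;μ} Q)(s,a) = r(s,a) + γ · Σ_{v} (Π_j P(v_j)) ·
  kmin_k( j ↦ Σ_{s'} M(v_j)(s,a)(s') · α·log Σ_{a'} μ(a'|s')·exp(Q(s',a')/α) )`. -/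
noncomputable def softBellman {S A ι : Type*} [Fintype S] [Fintype A] [Fintype ι]
    (r : S → A → ℝ) (γ : ℝ) (P : ι → ℝ) (M : ι → S → A → S → ℝ)
    (μ : S → A → ℝ) (α : ℝ) (N : ℕ) (k : Fin N) (Q : S → A → ℝ) : S → A → ℝ :=
  fun s a => r s a + γ * ∑ v : Fin N → ι, (∏ j, P (v j)) *
    kmin (fun j => ∑ s', M (v j) s a s' *
      (α * Real.log (∑ a', μ s' a' * Real.exp (Q s' a' / α)))) k

/-- The regularized `(N,k)`-pessimistic evaluation operator for policy `π`, reference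
policy `μ` and coefficient `α` (with `k` given 0-indexed as `k : Fin N`):
`(B̄^π_{N,k;μ} Q)(s,a) = r(s,a) + γ · Σ_{v} (Π_j P(v_j)) ·
  kmin_k( j ↦ Σ_{s'} M(v_j)(s,a)(s') · (Σ_{a'} π(a'|s')·Q(s',a') − α·KL(π(·|s')‖μ(·|s'))) )`. -/
noncomputable def regBellman {S A ι : Type*} [Fintype S] [Fintype A] [Fintype ι]
    (r : S → A → ℝ) (γ : ℝ) (P : ι → ℝ) (M : ι → S → A → S → ℝ)
    (π μ : S → A → ℝ) (α : ℝ) (N : ℕ) (k : Fin N) (Q : S → A → ℝ) : S → A → ℝ :=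
  fun s a => r s a + γ * ∑ v : Fin N → ι, (∏ j, P (v j)) *
    kmin (fun j => ∑ s', M (v j) s a s' *
      ((∑ a', π s' a' * Q s' a') - α * KLdiv (π s') (μ s'))) k

lemma kmin_le_aux {N : ℕ} (x y : Fin N → ℝ) (c : ℝ) (h : ∀ j, x j ≤ y j + c) (k : Fin N) :
    kmin x k ≤ kmin y k + c := by
  by_contra hlt
  push Not at hlt
  unfold kmin at hlt
  have key : ∀ i ∈ Finset.Iic k, (Tuple.sort x).symm (Tuple.sort y i) ∈ Finset.Iio k := by
    intro i hi
    rw [Finset.mem_Iic] at hi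
    rw [Finset.mem_Iio]
    by_contra hge
    push Not at hge
    have h1 := Tuple.monotone_sort x hge
    have h2 := Tuple.monotone_sort y hi
    simp only [Function.comp_apply, Equiv.apply_symm_apply] at h1 h2
    have h3 := h (Tuple.sort y i)
    linarith
  have hc := Finset.card_le_card_of_injOn (fun i => (Tuple.sort x).symm (Tuple.sort y i)) key
    (fun a _ b _ hab => by simpa using hab)
  simp at hc

lemma abs_kmin_sub_le {N : ℕ} (x y : Fin N → ℝ) (c : ℝ) (h : ∀ j, |x j - y j| ≤ c) (k : Fin N) :
    |kmin x k - kmin y k| ≤ c := by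
  have h1 := kmin_le_aux x y c (fun j => by linarith [(abs_le.1 (h j)).2]) k
  have h2 := kmin_le_aux y x c (fun j => by linarith [(abs_le.1 (h j)).1]) k
  rw [abs_le]; constructor <;> linarith

lemma abs_avg_sub_le {β : Type*} [Fintype β] (p : β → ℝ) (hp : IsPMF p) (x y : β → ℝ) (c : ℝ)
    (h : ∀ j, |x j - y j| ≤ c) : |∑ j, p j * x j - ∑ j, p j * y j| ≤ c := by
  rw [← Finset.sum_sub_distrib]
  calc |∑ j, (p j * x j - p j * y j)| ≤ ∑ j, |p j * x j - p j * y j| :=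
        Finset.abs_sum_le_sum_abs _ _
    _ ≤ ∑ j, p j * c := by
        apply Finset.sum_le_sum
        intro j _
        rw [← mul_sub, abs_mul, abs_of_nonneg (hp.1 j)]
        exact mul_le_mul_of_nonneg_left (h j) (hp.1 j)
    _ = c := by rw [← Finset.sum_mul, hp.2, one_mul]

lemma lse_le_aux {A : Type*} [Fintype A] [Nonempty A] (m : A → ℝ) (hm : ∀ a, 0 < m a)
    (α : ℝ) (hα : 0 < α) (x y : A → ℝ) (c : ℝ) (h : ∀ a, x a ≤ y a + c) :
    α * Real.log (∑ a, m a * Real.exp (x a / α))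
      ≤ α * Real.log (∑ a, m a * Real.exp (y a / α)) + c := by
  have hpos : ∀ z : A → ℝ, 0 < ∑ a, m a * Real.exp (z a / α) := fun z =>
    Finset.sum_pos (fun a _ => mul_pos (hm a) (Real.exp_pos _)) Finset.univ_nonempty
  have h1 : ∑ a, m a * Real.exp (x a / α)
      ≤ (∑ a, m a * Real.exp (y a / α)) * Real.exp (c / α) := by
    rw [Finset.sum_mul]
    apply Finset.sum_le_sum
    intro a _
    rw [mul_assoc, ← Real.exp_add, ← add_div]
    have := h a
    have := (hm a).le
    gcongr
  have h2 := Real.log_le_log (hpos x) h1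
  rw [Real.log_mul (hpos y).ne' (Real.exp_pos _).ne', Real.log_exp] at h2
  have h3 := mul_le_mul_of_nonneg_left h2 hα.le
  rwa [mul_add, mul_div_cancel₀ _ hα.ne'] at h3

lemma supNorm_eq_norm {S A : Type*} [Fintype S] [Fintype A] [Nonempty S] [Nonempty A]
    (Q : S → A → ℝ) : supNorm Q = ‖Q‖ := by
  apply le_antisymm
  · apply Finset.sup'_le
    intro p _
    exact (norm_le_pi_norm (Q p.1) p.2).trans (norm_le_pi_norm Q p.1)
  · have h : ∀ s a, |Q s a| ≤ supNorm Q := fun s a =>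
      Finset.le_sup' (fun p : S × A => |Q p.1 p.2|) (Finset.mem_univ (s, a))
    have h0 : 0 ≤ supNorm Q :=
      (abs_nonneg _).trans (h (Classical.arbitrary S) (Classical.arbitrary A))
    exact (pi_norm_le_iff_of_nonneg h0).2 fun s => (pi_norm_le_iff_of_nonneg h0).2 fun a => h s a

lemma isPMF_prod {ι : Type*} [Fintype ι] (P : ι → ℝ) (hP : IsPMF P) (N : ℕ) :
    IsPMF (fun v : Fin N → ι => ∏ j, P (v j)) := by
  classical
  refine ⟨fun v => Finset.prod_nonneg fun j _ => hP.1 _, ?_⟩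
  have := (Finset.prod_univ_sum (fun _ : Fin N => (Finset.univ : Finset ι)) (fun _ i => P i)).symm
  simpa [hP.2] using this

lemma softBellman_dist {S A ι : Type*} [Fintype S] [Fintype A] [Fintype ι]
    [Nonempty S] [Nonempty A]
    (r : S → A → ℝ) (γ : ℝ) (hγ0 : 0 ≤ γ)
    (μ : S → A → ℝ) (hμpos : ∀ s a, 0 < μ s a)
    (α : ℝ) (hα : 0 < α)
    (P : ι → ℝ) (hP : IsPMF P)
    (M : ι → S → A → S → ℝ) (hM : ∀ v s a, IsPMF (M v s a))
    (N : ℕ) (k : Fin N) (Q1 Q2 : S → A → ℝ) :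
    ‖softBellman r γ P M μ α N k Q1 - softBellman r γ P M μ α N k Q2‖ ≤ γ * ‖Q1 - Q2‖ := by
  have h0 : 0 ≤ γ * ‖Q1 - Q2‖ := by positivity
  have hQ : ∀ s a, |Q1 s a - Q2 s a| ≤ ‖Q1 - Q2‖ := fun s a =>
    (norm_le_pi_norm ((Q1 - Q2) s) a).trans (norm_le_pi_norm (Q1 - Q2) s)
  refine (pi_norm_le_iff_of_nonneg h0).2 fun s => (pi_norm_le_iff_of_nonneg h0).2 fun a => ?_
  simp only [Pi.sub_apply, softBellman, Real.norm_eq_abs]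
  rw [add_sub_add_left_eq_sub, ← mul_sub, abs_mul, abs_of_nonneg hγ0]
  refine mul_le_mul_of_nonneg_left ?_ hγ0
  refine abs_avg_sub_le _ (isPMF_prod P hP N) _ _ _ fun v => ?_
  refine abs_kmin_sub_le _ _ _ (fun j => ?_) k
  refine abs_avg_sub_le _ (hM (v j) s a) _ _ _ fun s' => ?_
  have h1 := lse_le_aux (μ s') (hμpos s') α hα (Q1 s') (Q2 s') ‖Q1 - Q2‖
    (fun a => by linarith [(abs_le.1 (hQ s' a)).2])
  have h2 := lse_le_aux (μ s') (hμpos s') α hα (Q2 s') (Q1 s') ‖Q1 - Q2‖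
    (fun a => by linarith [(abs_le.1 (hQ s' a)).1])
  rw [abs_le]; constructor <;> linarith

/-- Theorem 4, contraction part: the soft `(N,k)`-pessimistic Bellman operator is a
`γ`-contraction for the sup norm; consequently it has a unique fixed point, and from any
starting point the iterates converge to the fixed point in sup norm. -/
theorem softBellman_contraction {S A ι : Type*} [Fintype S] [Fintype A] [Fintype ι]
    [Nonempty S] [Nonempty A] [Nonempty ι]
    (r : S → A → ℝ) (γ : ℝ) (hγ0 : 0 ≤ γ) (hγ1 : γ < 1)
    (μ : S → A → ℝ) (hμ : ∀ s, IsPMF (μ s)) (hμpos : ∀ s a, 0 < μ s a)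
    (α : ℝ) (hα : 0 < α)
    (P : ι → ℝ) (hP : IsPMF P)
    (M : ι → S → A → S → ℝ) (hM : ∀ v s a, IsPMF (M v s a))
    (N : ℕ) (hN : 1 ≤ N) (k : ℕ) (hk1 : 1 ≤ k) (hkN : k ≤ N) :
    (∀ Q1 Q2 : S → A → ℝ,
      supNorm (fun s a => softBellman r γ P M μ α N ⟨k - 1, by omega⟩ Q1 s a
          - softBellman r γ P M μ α N ⟨k - 1, by omega⟩ Q2 s a)
        ≤ γ * supNorm (fun s a => Q1 s a - Q2 s a)) ∧
    (∃! Qfix : S → A → ℝ, softBellman r γ P M μ α N ⟨k - 1, by omega⟩ Qfix = Qfix) ∧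
    (∀ Qfix : S → A → ℝ, softBellman r γ P M μ α N ⟨k - 1, by omega⟩ Qfix = Qfix →
      ∀ Q : S → A → ℝ,
        Filter.Tendsto
          (fun n => supNorm
            (fun s a => (softBellman r γ P M μ α N ⟨k - 1, by omega⟩)^[n] Q s a - Qfix s a))
          Filter.atTop (nhds 0)) := by
  have hk : k - 1 < N := by omega
  have hd := softBellman_dist r γ hγ0 μ hμpos α hα P hP M hM N ⟨k - 1, hk⟩
  have hc : ContractingWith ⟨γ, hγ0⟩ (softBellman r γ P M μ α N ⟨k - 1, hk⟩) := by
    refine ⟨by exact_mod_cast hγ1, LipschitzWith.of_dist_le_mul fun x y => ?_⟩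
    rw [dist_eq_norm, dist_eq_norm]
    exact hd x y
  refine ⟨fun Q1 Q2 => ?_, ⟨hc.fixedPoint, hc.fixedPoint_isFixedPt, fun y hy => ?_⟩, ?_⟩
  · rw [supNorm_eq_norm, supNorm_eq_norm]
    exact hd Q1 Q2
  · exact hc.fixedPoint_unique hy
  · intro Qfix hfix Q
    have ht := hc.tendsto_iterate_fixedPoint Q
    rw [← hc.fixedPoint_unique hfix, tendsto_iff_norm_sub_tendsto_zero] at ht
    refine ht.congr fun n => ?_
    rw [supNorm_eq_norm]
    rfl
end
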